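/- Let 𝔤 be a finite-dimensional real Lie algebra whose Killing form K(X,Y) = trace(ad X ∘ ad Y) is indefinite (there exist vectors Y₊, Y₋ ∈ 𝔤 with K(Y₊,Y₊) > 0 and K(Y₋,Y₋) < 0), let α be an inner product on 𝔤 and let V ∈ 𝔤 satisfy α(V,V) < 1. Then there exist at least four geodesic vectors X₁, X₂, X₃, X₄ for (α, V) such that no one of them is a positive scalar multiple of another. -/

import Mathlib

/-- A nonzero `X` is a geodesic vector for the data `(α, V)` of a left-invariant
Randers metric if `α (X + √(α X X) • V) ⁅X, U⁆ = 0` for all `U`. -/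
def IsGeodesicVector {L : Type*} [LieRing L] [LieAlgebra ℝ L]
    (α : L →ₗ[ℝ] L →ₗ[ℝ] ℝ) (V X : L) : Prop :=
  X ≠ 0 ∧ ∀ U : L, α (X + Real.sqrt (α X X) • V) ⁅X, U⁆ = 0

/-- The Killing form K(X,Y) = trace(ad X ∘ ad Y) of a real Lie algebra. -/
noncomputable def killing (L : Type*) [LieRing L] [LieAlgebra ℝ L] (X Y : L) : ℝ :=
  LinearMap.trace ℝ L (LieAlgebra.ad ℝ L X ∘ₗ LieAlgebra.ad ℝ L Y)

/-!
Let `F` be the Randers norm and let `B` be the Killing form or its negative. At a critical point `x`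
of `B/F²` with `B(x, x) > 0`, the differential of `F` is a multiple of `B(x, ·)`, which annihilates
all `[x, u]` by invariance, so `x` is a geodesic vector. One such ray is given by the maximum of
`B/F²`. For a second one, project onto a maximal positive definite subspace and minimise, over the
nonzero points of this subspace, the maximum of `B/F²` on the fibre. By strict convexity of `F` each
fibre has only one maximiser, which is what makes the minimax point critical although the fibrewise
maximum need not be differentiable a priori. If the minimax value equals the maximum, the opposite
fibre supplies the second ray. Since `B` is positive on these rays, the two choices of `B` give
altogether four different rays.
-/

open Filter Topology

section Basis

variable {ι R M : Type*} [CommSemiring R] [AddCommMonoid M] [Module R M]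

theorem apply_self_eq_sum_repr_sq [Fintype ι] (B : LinearMap.BilinForm R M)
    (v : Module.Basis ι R M) (hv : B.IsOrthoᵢ v) (x : M) :
    B x x = ∑ i, v.repr x i ^ 2 * B (v i) (v i) := by
  conv_lhs => rw [← v.sum_repr x]
  simp only [map_sum, LinearMap.sum_apply, map_smul, LinearMap.smul_apply, smul_eq_mul]
  refine Finset.sum_congr rfl fun i _ => ?_
  rw [Finset.sum_eq_single i (fun j _ hj => by rw [hv hj]; simp) (by simp)]
  ring

theorem repr_constr_ite (v : Module.Basis ι R M) (p : ι → Prop) [DecidablePred p] (x : M) (i : ι) :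
    v.repr (v.constr R (fun j => if p j then v j else 0) x) i = if p i then v.repr x i else 0 := by
  set P := v.constr R fun j => if p j then v j else 0
  have h : v.coord i ∘ₗ P = if p i then v.coord i else 0 := by
    refine v.ext fun j => ?_
    have hPj : P (v j) = if p j then v j else 0 := v.constr_basis R _ j
    rw [LinearMap.comp_apply, hPj]
    rcases eq_or_ne j i with rfl | hji
    · split_ifs <;> simp
    · split_ifs <;> simp [hji]
  have hx := LinearMap.congr_fun h x
  split_ifs at hx ⊢ <;> exact hx

end Basis

section BilinForm

variable {E : Type*} [AddCommGroup E] [Module ℝ E]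

theorem not_sameRay_of_pos_of_neg {B : LinearMap.BilinForm ℝ E} {x y : E} (hx : 0 < B x x)
    (hy : B y y < 0) : ¬SameRay ℝ x y := by
  intro h
  obtain ⟨r, s, hr, hs, hrs⟩ := h.exists_pos (fun h => hx.ne' (by simp [h]))
    (fun h => hy.ne (by simp [h]))
  have h := congrArg (fun z => B z z) hrs
  simp only [map_smul, LinearMap.smul_apply, smul_eq_mul] at h
  have hpos : 0 < r * (r * B x x) := by positivity
  have hneg : s * (s * B y y) < 0 := mul_neg_of_pos_of_neg hs (mul_neg_of_pos_of_neg hs hy)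
  linarith

/-- `P` is a projection onto a positive definite subspace for `B` along a `B`-orthogonal complement
on which `B` is negative semidefinite. For symmetric `B`, the field `le` encodes both properties of
the complement `ker P`. -/
structure IsPosProjection (B : LinearMap.BilinForm ℝ E) (P : E →ₗ[ℝ] E) : Prop where
  idem : ∀ x, P (P x) = P x
  pos : ∀ x, P x ≠ 0 → 0 < B (P x) (P x)
  le : ∀ x, B x x ≤ B (P x) (P x)

theorem exists_isPosProjection [FiniteDimensional ℝ E] (B : LinearMap.BilinForm ℝ E)
    (hB : B.IsSymm) : ∃ P, IsPosProjection B P := by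
  obtain ⟨v, hv⟩ := LinearMap.BilinForm.exists_orthogonal_basis
    (LinearMap.BilinForm.isSymm_iff.1 hB)
  let P : E →ₗ[ℝ] E := v.constr ℝ fun i => if 0 < B (v i) (v i) then v i else 0
  have hP : ∀ x i, v.repr (P x) i = if 0 < B (v i) (v i) then v.repr x i else 0 :=
    repr_constr_ite v fun i => 0 < B (v i) (v i)
  refine ⟨P, fun x => v.ext_elem fun i => ?_, fun x hx => ?_, fun x => ?_⟩
  · rw [hP, hP]
    split_ifs <;> rfl
  · obtain ⟨i, hi⟩ : ∃ i, v.repr (P x) i ≠ 0 := by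
      by_contra! h
      exact hx (v.ext_elem (by simpa using h))
    rw [apply_self_eq_sum_repr_sq B v hv]
    refine Finset.sum_pos' (fun j _ => ?_) ⟨i, Finset.mem_univ i, ?_⟩
    · rw [hP]
      split_ifs <;> [positivity; simp]
    · have hpos : 0 < B (v i) (v i) := by
        by_contra h
        exact hi (by rw [hP, if_neg h])
      positivity
  · rw [apply_self_eq_sum_repr_sq B v hv, apply_self_eq_sum_repr_sq B v hv]
    refine Finset.sum_le_sum fun i _ => ?_
    rw [hP]
    split_ifs with hi
    · rfl
    · nlinarith [sq_nonneg (v.repr x i)]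

end BilinForm

section Minkowski

variable {E : Type*} [NormedAddCommGroup E] [NormedSpace ℝ E]

/-- A Minkowski norm in the sense of Finsler geometry: a norm that need not be symmetric. The
smoothness and strong convexity that are usually required are weakened to class `C¹` away from `0`
and strict convexity. -/
structure IsMinkowskiNorm (F : E → ℝ) : Prop where
  pos : ∀ {x}, x ≠ 0 → 0 < F x
  map_smul : ∀ {t : ℝ}, 0 < t → ∀ x, F (t • x) = t * F x
  add_lt : ∀ {x y}, ¬SameRay ℝ x y → F (x + y) < F x + F y
  contDiffAt : ∀ {x}, x ≠ 0 → ContDiffAt ℝ 1 F x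

/-- The Rayleigh quotient of the quadratic form of `B` relative to the Minkowski norm `F`; its value
at `0` is `0` because of division by zero. -/
noncomputable def rayleigh (B : LinearMap.BilinForm ℝ E) (F : E → ℝ) (x : E) : ℝ :=
  B x x / F x ^ 2

variable {B : LinearMap.BilinForm ℝ E} {F : E → ℝ} {P : E →ₗ[ℝ] E} {x y : E} {c : ℝ}

theorem ne_zero_of_rayleigh_pos (h : 0 < rayleigh B F x) : x ≠ 0 := by
  rintro rfl
  simp [rayleigh] at h

theorem le_rayleigh_iff (hF : IsMinkowskiNorm F) (hx : x ≠ 0) :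
    c ≤ rayleigh B F x ↔ c * F x ^ 2 ≤ B x x :=
  le_div_iff₀ (pow_pos (hF.pos hx) 2)

theorem rayleigh_pos_iff (hF : IsMinkowskiNorm F) : 0 < rayleigh B F x ↔ 0 < B x x := by
  rcases eq_or_ne x 0 with rfl | hx
  · simp [rayleigh]
  · exact div_pos_iff_of_pos_right (pow_pos (hF.pos hx) 2)

theorem rayleigh_smul (hF : IsMinkowskiNorm F) {t : ℝ} (ht : 0 < t) (x : E) :
    rayleigh B F (t • x) = rayleigh B F x := by
  simp only [rayleigh, hF.map_smul ht, map_smul, LinearMap.smul_apply, smul_eq_mul, mul_pow]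
  rw [← mul_assoc, ← sq, mul_div_mul_left _ _ (by positivity)]

theorem rayleigh_eq_of_sameRay (hF : IsMinkowskiNorm F) (hx : x ≠ 0) (hy : y ≠ 0)
    (h : SameRay ℝ x y) : rayleigh B F x = rayleigh B F y := by
  obtain ⟨r, s, hr, hs, hrs⟩ := h.exists_pos hx hy
  rw [← rayleigh_smul hF hr x, hrs, rayleigh_smul hF hs y]

/-- `x` maximises the Rayleigh quotient on its fibre under `P`; the minimax value is the least such
fibrewise maximum over the nonzero values of `P`. -/
def IsRayleighFiberMax (B : LinearMap.BilinForm ℝ E) (F : E → ℝ) (P : E →ₗ[ℝ] E) (x : E) : Prop :=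
  ∀ y, P y = P x → rayleigh B F y ≤ rayleigh B F x

/-- This is where strict convexity enters: by the parallelogram law, the hypothesis on `x - y` makes
`√B` superadditive. -/
theorem lt_rayleigh_add (hF : IsMinkowskiNorm F) (hxy : ¬SameRay ℝ x y)
    (hsub : B (x - y) (x - y) ≤ 0) (hc : 0 < c) (hx : c ≤ rayleigh B F x)
    (hy : c ≤ rayleigh B F y) : c < rayleigh B F (x + y) := by
  have hx0 := ne_zero_of_rayleigh_pos (hc.trans_le hx)
  have hy0 := ne_zero_of_rayleigh_pos (hc.trans_le hy)
  have hBx := (rayleigh_pos_iff hF).1 (hc.trans_le hx)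
  have hBy := (rayleigh_pos_iff hF).1 (hc.trans_le hy)
  rw [le_rayleigh_iff hF hx0] at hx
  rw [le_rayleigh_iff hF hy0] at hy
  have hparallelogram : B (x + y) (x + y) + B (x - y) (x - y) = 2 * (B x x + B y y) := by
    simp only [map_add, map_sub, LinearMap.add_apply, LinearMap.sub_apply]
    ring
  have hxy0 : x + y ≠ 0 := fun h => by
    simp only [h, map_zero] at hparallelogram
    linarith
  have hFxy := hF.pos hxy0
  rw [rayleigh, lt_div_iff₀ (pow_pos hFxy 2)]
  calc c * F (x + y) ^ 2 < c * (F x + F y) ^ 2 := by gcongr; exact hF.add_lt hxy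
    _ ≤ 2 * (c * F x ^ 2 + c * F y ^ 2) := by nlinarith [mul_nonneg hc.le (sq_nonneg (F x - F y))]
    _ ≤ B (x + y) (x + y) := by linarith

theorem fderiv_rayleigh_eq_zero_of_max (hx : x ≠ 0)
    (hmax : ∀ y ≠ 0, rayleigh B F y ≤ rayleigh B F x) : fderiv ℝ (rayleigh B F) x = 0 :=
  IsLocalMax.fderiv_eq_zero <| by
    filter_upwards [isOpen_ne.mem_nhds hx] with y hy using hmax y hy

/-- Strict differentiability allows the base point `y t` of the increment to move with `t`. -/
theorem nonneg_of_hasStrictFDerivAt {f : E → ℝ} {f' : E →L[ℝ] ℝ} {w : E}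
    (hf : HasStrictFDerivAt f f' x) {y : ℝ → E} (hy : Tendsto y (𝓝[>] 0) (𝓝 x))
    (hle : ∀ᶠ t in 𝓝[>] 0, f (y t - t • w) ≤ f (y t)) : 0 ≤ f' w := by
  have ht : Tendsto (fun t : ℝ => t) (𝓝[>] 0) (𝓝 0) := nhdsWithin_le_nhds
  have hpair : Tendsto (fun t => (y t, y t - t • w)) (𝓝[>] 0) (𝓝 (x, x)) :=
    hy.prodMk_nhds (by simpa using hy.sub (ht.smul_const w))
  have hlittle : (fun t => f (y t) - f (y t - t • w) - t * f' w) =o[𝓝[>] 0] fun t : ℝ => t := by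
    have h := hf.isLittleO.comp_tendsto hpair
    simp only [Function.comp_def, sub_sub_cancel, map_smul, smul_eq_mul] at h
    exact h.trans_isBigO (.of_bound ‖w‖ (.of_forall fun t => by rw [norm_smul, mul_comm]))
  have hquot : Tendsto (fun t => (f (y t) - f (y t - t • w)) / t) (𝓝[>] 0) (𝓝 (f' w)) := by
    have h := hlittle.tendsto_div_nhds_zero.add_const (f' w)
    rw [zero_add] at h
    refine h.congr' ?_
    filter_upwards [self_mem_nhdsWithin] with t ht
    rw [sub_div, mul_div_cancel_left₀ _ (ne_of_gt ht), sub_add_cancel]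
  refine ge_of_tendsto hquot ?_
  filter_upwards [hle, self_mem_nhdsWithin] with t hft ht
  exact div_nonneg (sub_nonneg.2 hft) (le_of_lt ht)

namespace IsPosProjection

theorem apply_self_nonpos (hP : IsPosProjection B P) (hx : P x = 0) : B x x ≤ 0 := by
  simpa [hx] using hP.le x

theorem map_ne_zero_of_rayleigh_pos (hP : IsPosProjection B P) (hF : IsMinkowskiNorm F)
    (hx : 0 < rayleigh B F x) : P x ≠ 0 := fun h =>
  ((rayleigh_pos_iff hF).1 hx).not_ge (hP.apply_self_nonpos h)

theorem rayleigh_map_pos (hP : IsPosProjection B P) (hF : IsMinkowskiNorm F) (hx : P x ≠ 0) :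
    0 < rayleigh B F (P x) :=
  (rayleigh_pos_iff hF).2 (hP.pos x hx)

/-- The superlevel sets of the Rayleigh quotient are strictly convex along the fibres of `P`, so
a fibrewise maximiser is unique. -/
theorem eq_of_rayleigh_fiberMax (hP : IsPosProjection B P) (hF : IsMinkowskiNorm F)
    (hpos : 0 < rayleigh B F x) (hmax : IsRayleighFiberMax B F P x)
    (hPy : P y = P x) (hxy : rayleigh B F x ≤ rayleigh B F y) : y = x := by
  have hPx := hP.map_ne_zero_of_rayleigh_pos hF hpos
  by_contra hne
  have hray : ¬SameRay ℝ x y := fun h => by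
    obtain ⟨r, s, hr, -, hrs⟩ := h.exists_pos (ne_zero_of_rayleigh_pos hpos)
      (ne_zero_of_rayleigh_pos (hpos.trans_le hxy))
    have hPrs : r • P x = s • P x := by rw [← map_smul, hrs, map_smul, hPy]
    obtain rfl := smul_left_injective ℝ hPx hPrs
    exact hne (smul_right_injective E hr.ne' hrs).symm
  have hlt := lt_rayleigh_add hF hray (hP.apply_self_nonpos (by simp [hPy])) hpos le_rfl hxy
  rw [← rayleigh_smul hF (inv_pos.2 two_pos) (x + y)] at hlt
  refine (hmax _ ?_).not_gt hlt
  rw [map_smul, map_add, hPy, ← two_smul ℝ (P x), inv_smul_smul₀ two_ne_zero]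

end IsPosProjection

variable [FiniteDimensional ℝ E]

theorem fderiv_apply_self (hB : B.IsSymm) (x w : E) :
    fderiv ℝ (fun y => B y y) x w = 2 * B x w := by
  have h : HasFDerivAt (fun y => B y y) _ x :=
    (LinearMap.toContinuousBilinearMap B).hasFDerivAt.clm_apply (hasFDerivAt_id x)
  rw [h.fderiv]
  simp [hB.eq w x, two_mul]

theorem contDiffAt_rayleigh (hF : IsMinkowskiNorm F) (hx : x ≠ 0) :
    ContDiffAt ℝ 1 (rayleigh B F) x := by
  have hB : ContDiff ℝ 1 fun y => (LinearMap.toContinuousBilinearMap B) y y := by fun_prop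
  exact hB.contDiffAt.div ((hF.contDiffAt hx).pow 2) (pow_pos (hF.pos hx) 2).ne'

theorem continuousAt_rayleigh (hF : IsMinkowskiNorm F) (hx : x ≠ 0) :
    ContinuousAt (rayleigh B F) x :=
  (contDiffAt_rayleigh hF hx).continuousAt

theorem apply_eq_of_fderiv_rayleigh_eq_zero (hB : B.IsSymm) (hF : IsMinkowskiNorm F) (hx : x ≠ 0)
    (hcrit : fderiv ℝ (rayleigh B F) x = 0) (w : E) :
    B x w = rayleigh B F x * F x * fderiv ℝ F x w := by
  have hQ := ((contDiffAt_rayleigh (B := B) hF hx).differentiableAt one_ne_zero).hasFDerivAt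
  have hF' := ((hF.contDiffAt hx).differentiableAt one_ne_zero).hasFDerivAt
  have heq : (fun y => B y y) =ᶠ[𝓝 x] rayleigh B F * F ^ 2 := by
    filter_upwards [isOpen_ne.mem_nhds hx] with y hy
    exact (div_mul_cancel₀ _ (pow_pos (hF.pos hy) 2).ne').symm
  have h := congrArg (fun D => D w) <|
    ((hQ.mul (hF'.pow 2)).congr_of_eventuallyEq heq).fderiv
  simp only [fderiv_apply_self hB, Nat.add_one_sub_one, pow_one, nsmul_eq_mul, Nat.cast_ofNat,
    hcrit, smul_zero, add_zero, smul_apply, smul_eq_mul] at h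
  linear_combination h / 2

theorem exists_rayleigh_max [Nontrivial E] (B : LinearMap.BilinForm ℝ E) (hF : IsMinkowskiNorm F) :
    ∃ x ≠ 0, ∀ y ≠ 0, rayleigh B F y ≤ rayleigh B F x := by
  obtain ⟨x, hx, hmax⟩ := (isCompact_sphere (0 : E) 1).exists_isMaxOn
    (NormedSpace.sphere_nonempty.2 zero_le_one) (f := rayleigh B F) fun x hx =>
      (continuousAt_rayleigh hF (ne_zero_of_mem_unit_sphere ⟨x, hx⟩)).continuousWithinAt
  refine ⟨x, ne_zero_of_mem_unit_sphere ⟨x, hx⟩, fun y hy => ?_⟩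
  rw [← rayleigh_smul hF (inv_pos.2 (norm_pos_iff.2 hy)) y]
  exact hmax (by simp [norm_smul, hy])

theorem lowerSemicontinuousAt_rayleigh_fiberMax (hF : IsMinkowskiNorm F) {f : E → E}
    (hPf : ∀ a, P a ≠ 0 → P (f a) = P a)
    (hf : ∀ a, P a ≠ 0 → IsRayleighFiberMax B F P (f a)) {a : E} (ha : P a ≠ 0) :
    LowerSemicontinuousAt (fun b => rayleigh B F (f b)) a := by
  intro c hc
  have hfa : f a ≠ 0 := fun h => ha (by rw [← hPf a ha, h, map_zero])
  have hcont : ContinuousAt (fun b => rayleigh B F (f a + (b - a))) a :=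
    ContinuousAt.comp (g := rayleigh B F) (by simpa using continuousAt_rayleigh hF hfa)
      (by fun_prop)
  have hne : ∀ᶠ b in 𝓝 a, P b ≠ 0 :=
    (P.continuous_of_finiteDimensional.tendsto a).eventually_ne ha
  filter_upwards [hcont.eventually_const_lt (by simpa using hc), hne] with b hb hb0
  exact hb.trans_le (hf b hb0 _ (by simp [hPf a ha, hPf b hb0]))

namespace IsPosProjection

theorem exists_norm_le_mul_norm_map (hP : IsPosProjection B P) (hF : IsMinkowskiNorm F)
    (hc : 0 < c) : ∃ C, ∀ x, c ≤ rayleigh B F x → ‖x‖ ≤ C * ‖P x‖ := by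
  have hcompact : IsCompact (Metric.sphere (0 : E) 1 ∩ rayleigh B F ⁻¹' Set.Ici c) := by
    refine (isCompact_sphere 0 1).of_isClosed_subset ?_ Set.inter_subset_left
    exact ContinuousOn.preimage_isClosed_of_isClosed (fun x hx => (continuousAt_rayleigh hF
      (ne_zero_of_mem_unit_sphere ⟨x, hx⟩)).continuousWithinAt) Metric.isClosed_sphere isClosed_Ici
  obtain ⟨δ, hδ, hle⟩ := hcompact.exists_forall_le'
    (P.continuous_of_finiteDimensional.norm.continuousOn) (a := 0) fun x hx =>
      norm_pos_iff.2 (hP.map_ne_zero_of_rayleigh_pos hF (hc.trans_le hx.2))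
  refine ⟨δ⁻¹, fun x hx => ?_⟩
  have hx0 : 0 < ‖x‖ := norm_pos_iff.2 (ne_zero_of_rayleigh_pos (hc.trans_le hx))
  have hunit := hle (‖x‖⁻¹ • x) ⟨by simp [norm_smul, hx0.ne'], by
    simpa only [Set.mem_preimage, Set.mem_Ici, rayleigh_smul hF (inv_pos.2 hx0)] using hx⟩
  rw [map_smul, norm_smul, norm_inv, norm_norm, le_inv_mul_iff₀ hx0] at hunit
  rwa [le_inv_mul_iff₀ hδ, mul_comm]

theorem exists_rayleigh_fiberMax (hP : IsPosProjection B P) (hF : IsMinkowskiNorm F) {a : E}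
    (ha : P a ≠ 0) : ∃ x, P x = P a ∧ IsRayleighFiberMax B F P x := by
  obtain ⟨C, hC⟩ := hP.exists_norm_le_mul_norm_map hF (hP.rayleigh_map_pos hF ha)
  have hcont : ContinuousOn (rayleigh B F) (P ⁻¹' {P a}) := fun y hy =>
    (continuousAt_rayleigh hF fun h0 => ha (by simpa [h0] using hy.symm)).continuousWithinAt
  have hclosed : IsClosed (P ⁻¹' {P a}) :=
    isClosed_singleton.preimage P.continuous_of_finiteDimensional
  have hcompact : IsCompact (P ⁻¹' {P a} ∩ rayleigh B F ⁻¹' Set.Ici (rayleigh B F (P a))) := by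
    refine (isCompact_closedBall 0 (C * ‖P a‖)).of_isClosed_subset
      (hcont.preimage_isClosed_of_isClosed hclosed isClosed_Ici) fun y hy => ?_
    have hPy : P y = P a := hy.1
    rw [mem_closedBall_zero_iff, ← hPy]
    exact hC y hy.2
  obtain ⟨x, hx, hmax⟩ := hcompact.exists_isMaxOn ⟨P a, hP.idem a, le_refl (rayleigh B F (P a))⟩
    (hcont.mono Set.inter_subset_left)
  refine ⟨x, hx.1, fun y hy => ?_⟩
  replace hy : P y = P a := hy.trans hx.1
  by_cases hy' : rayleigh B F (P a) ≤ rayleigh B F y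
  · exact hmax ⟨hy, hy'⟩
  · exact (not_le.1 hy').le.trans hx.2

theorem tendsto_of_rayleigh_fiberMax_le (hP : IsPosProjection B P) (hF : IsMinkowskiNorm F)
    (hpos : 0 < rayleigh B F x) (hmax : IsRayleighFiberMax B F P x)
    {ι : Type*} {l : Filter ι} {y : ι → E} (hPy : Tendsto (fun i => P (y i)) l (𝓝 (P x)))
    (hy : ∀ᶠ i in l, rayleigh B F x ≤ rayleigh B F (y i)) : Tendsto y l (𝓝 x) := by
  obtain ⟨C, hC⟩ := hP.exists_norm_le_mul_norm_map hF hpos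
  have hbdd : ∀ᶠ i in l, y i ∈ Metric.closedBall 0 (|C| * (‖P x‖ + 1)) := by
    filter_upwards [hy, hPy.norm.eventually_le_const (lt_add_one _)] with i hi hPi
    rw [mem_closedBall_zero_iff]
    exact (hC _ hi).trans (by gcongr; exact le_abs_self C)
  rw [tendsto_iff_ultrafilter]
  intro g hg
  obtain ⟨u, -, hu : Tendsto y g (𝓝 u)⟩ := (isCompact_closedBall 0 _).ultrafilter_le_nhds (g.map y)
    (le_principal_iff.2 (hbdd.filter_mono hg))
  have hPu : P u = P x := tendsto_nhds_unique
    ((P.continuous_of_finiteDimensional.tendsto u).comp hu) (hPy.mono_left hg)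
  have hu0 : u ≠ 0 := by
    rintro rfl
    exact hP.map_ne_zero_of_rayleigh_pos hF hpos (by rw [← hPu, map_zero])
  have hxu : rayleigh B F x ≤ rayleigh B F u :=
    ge_of_tendsto ((continuousAt_rayleigh hF hu0).tendsto.comp hu) (hy.filter_mono hg)
  rwa [hP.eq_of_rayleigh_fiberMax hF hpos hmax hPu hxu] at hu

/-- If `u` lies over `x + t • w` and its Rayleigh quotient is at least that of `x`, then `u - t • w`
lies in the fibre of `x`, so that the quotient does not decrease from `u - t • w` to `u`. -/
theorem fderiv_rayleigh_eq_zero_of_minimax (hP : IsPosProjection B P) (hF : IsMinkowskiNorm F)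
    (hpos : 0 < rayleigh B F x) (hmax : IsRayleighFiberMax B F P x)
    (hmin : ∀ a, P a ≠ 0 → ∃ y, P y = P a ∧ rayleigh B F x ≤ rayleigh B F y) :
    fderiv ℝ (rayleigh B F) x = 0 := by
  have hstrict := (contDiffAt_rayleigh (B := B) hF
    (ne_zero_of_rayleigh_pos hpos)).hasStrictFDerivAt one_ne_zero
  have hnonneg : ∀ w, 0 ≤ fderiv ℝ (rayleigh B F) x w := by
    intro w
    choose! u hPu hu using hmin
    have hline : Tendsto (fun t : ℝ => x + t • w) (𝓝[>] 0) (𝓝 x) :=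
      tendsto_nhdsWithin_of_tendsto_nhds <| Continuous.tendsto' (by fun_prop) _ _ (by simp)
    have hPline : Tendsto (fun t : ℝ => P (x + t • w)) (𝓝[>] 0) (𝓝 (P x)) :=
      (P.continuous_of_finiteDimensional.tendsto x).comp hline
    have hne : ∀ᶠ t : ℝ in 𝓝[>] 0, P (x + t • w) ≠ 0 :=
      hPline.eventually_ne (hP.map_ne_zero_of_rayleigh_pos hF hpos)
    have hlim : Tendsto (fun t : ℝ => u (x + t • w)) (𝓝[>] 0) (𝓝 x) :=
      hP.tendsto_of_rayleigh_fiberMax_le hF hpos hmax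
        (hPline.congr' (hne.mono fun t ht => (hPu _ ht).symm)) (hne.mono fun t ht => hu _ ht)
    refine nonneg_of_hasStrictFDerivAt hstrict hlim (hne.mono fun t ht => ?_)
    exact (hmax _ (by simp [hPu _ ht])).trans (hu _ ht)
  ext w
  have hneg := hnonneg (-w)
  rw [map_neg] at hneg
  exact le_antisymm (neg_nonneg.1 hneg) (hnonneg w)

theorem exists_rayleigh_minimax (hP : IsPosProjection B P) (hF : IsMinkowskiNorm F) {x₀ : E}
    (hx₀ : P x₀ ≠ 0) :
    ∃ x, 0 < rayleigh B F x ∧ IsRayleighFiberMax B F P x ∧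
      ∀ a, P a ≠ 0 → ∃ y, P y = P a ∧ rayleigh B F x ≤ rayleigh B F y := by
  choose! f hPf hf using fun a (ha : P a ≠ 0) => hP.exists_rayleigh_fiberMax hF ha
  set S : Set E := Metric.sphere 0 1 ∩ {a | P a = a}
  have hS : IsCompact S := (isCompact_sphere 0 1).inter_right
    (isClosed_eq P.continuous_of_finiteDimensional continuous_id)
  have hPS : ∀ a ∈ S, P a ≠ 0 := by
    rintro a ⟨hunit, hPa : P a = a⟩
    rw [hPa]
    exact ne_zero_of_mem_unit_sphere ⟨a, hunit⟩
  have hnormalize : ∀ a, P a ≠ 0 → ‖P a‖⁻¹ • P a ∈ S := fun a ha =>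
    ⟨by simp [norm_smul, ha], by simp [hP.idem]⟩
  obtain ⟨a, ha, hmin⟩ := LowerSemicontinuousOn.exists_isMinOn ⟨_, hnormalize x₀ hx₀⟩ hS
    fun a ha => (lowerSemicontinuousAt_rayleigh_fiberMax hF hPf hf
      (hPS a ha)).lowerSemicontinuousWithinAt S
  have hpos : 0 < rayleigh B F (f a) := (hP.rayleigh_map_pos hF (hPS a ha)).trans_le
    (hf a (hPS a ha) _ (by rw [hP.idem, hPf a (hPS a ha)]))
  refine ⟨f a, hpos, hf a (hPS a ha), fun b hb => ?_⟩
  have hb' := hnormalize b hb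
  have hnorm := norm_pos_iff.2 hb
  refine ⟨‖P b‖ • f (‖P b‖⁻¹ • P b), ?_, ?_⟩
  · rw [map_smul, hPf _ (hPS _ hb'), map_smul, hP.idem, smul_inv_smul₀ hnorm.ne']
  · rw [rayleigh_smul hF hnorm]
    exact hmin hb'

end IsPosProjection

theorem exists_two_rays_fderiv_rayleigh_eq_zero (hB : B.IsSymm) (hF : IsMinkowskiNorm F)
    {x₀ : E} (hx₀ : 0 < B x₀ x₀) :
    ∃ x : Fin 2 → E, (∀ i, 0 < B (x i) (x i) ∧ fderiv ℝ (rayleigh B F) (x i) = 0) ∧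
      Pairwise fun i j => ¬SameRay ℝ (x i) (x j) := by
  rw [← rayleigh_pos_iff hF] at hx₀
  have hx₀0 := ne_zero_of_rayleigh_pos hx₀
  have : Nontrivial E := nontrivial_of_ne x₀ 0 hx₀0
  suffices h : ∃ x y, (0 < rayleigh B F x ∧ fderiv ℝ (rayleigh B F) x = 0) ∧
      (0 < rayleigh B F y ∧ fderiv ℝ (rayleigh B F) y = 0) ∧ ¬SameRay ℝ x y by
    simp only [rayleigh_pos_iff hF] at h
    obtain ⟨x, y, hx, hy, hxy⟩ := h
    refine ⟨![x, y], Fin.forall_fin_two.2 ⟨hx, hy⟩, fun i j hij => ?_⟩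
    fin_cases i <;> fin_cases j
    exacts [absurd rfl hij, hxy, fun h => hxy h.symm, absurd rfl hij]
  obtain ⟨P, hP⟩ := exists_isPosProjection B hB
  obtain ⟨x, hx0, hx⟩ := exists_rayleigh_max B hF
  obtain ⟨y, hy, hymax, hymin⟩ :=
    hP.exists_rayleigh_minimax hF (hP.map_ne_zero_of_rayleigh_pos hF hx₀)
  have hy0 := ne_zero_of_rayleigh_pos hy
  have hPy := hP.map_ne_zero_of_rayleigh_pos hF hy
  have hycrit := hP.fderiv_rayleigh_eq_zero_of_minimax hF hy hymax hymin
  rcases (hx y hy0).lt_or_eq with hlt | heq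
  · exact ⟨x, y, ⟨hy.trans hlt, fderiv_rayleigh_eq_zero_of_max hx0 hx⟩, ⟨hy, hycrit⟩,
      fun h => hlt.ne (rayleigh_eq_of_sameRay hF hx0 hy0 h).symm⟩
  · -- If the minimax value is the maximum, the fibre opposite to that of `y` contains a maximiser.
    obtain ⟨u, hPu, hu⟩ := hymin (-y) (by rwa [map_neg, neg_ne_zero])
    have humax : ∀ z ≠ 0, rayleigh B F z ≤ rayleigh B F u := fun z hz =>
      (hx z hz).trans (heq.symm.trans_le hu)
    refine ⟨y, u, ⟨hy, hycrit⟩, ⟨hy.trans_le hu, fderiv_rayleigh_eq_zero_of_max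
      (ne_zero_of_rayleigh_pos (hy.trans_le hu)) humax⟩, fun h => hPy ?_⟩
    have hopp := h.map P
    rw [hPu, map_neg] at hopp
    exact eq_zero_of_sameRay_self_neg hopp

end Minkowski

section Randers

variable {E : Type*} [NormedAddCommGroup E] [InnerProductSpace ℝ E] {V : E}

/-- The Randers norm `√α + β` with `α` the inner product of `E` and `β = ⟪V, ·⟫`. -/
noncomputable def randers (V x : E) : ℝ :=
  ‖x‖ + inner ℝ V x

theorem isMinkowskiNorm_randers (hV : ‖V‖ < 1) : IsMinkowskiNorm (randers V) where
  pos {x} hx := by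
    have hle := (abs_le.1 (abs_real_inner_le_norm V x)).1
    have hlt := mul_lt_of_lt_one_left (norm_pos_iff.2 hx) hV
    unfold randers
    linarith
  map_smul {t} ht x := by
    rw [randers, randers, norm_smul_of_nonneg ht.le, real_inner_smul_right, mul_add]
  add_lt h := by
    have hlt := norm_add_lt_of_not_sameRay h
    simp only [randers, inner_add_right]
    linarith
  contDiffAt hx := (contDiffAt_norm ℝ hx).add (contDiffAt_const.inner ℝ contDiffAt_id)

theorem norm_mul_fderiv_randers (V : E) {x : E} (hx : x ≠ 0) (w : E) :
    ‖x‖ * fderiv ℝ (randers V) x w = inner ℝ (x + ‖x‖ • V) w := by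
  have hn : HasFDerivAt (fun y : E => ‖y‖) (fderiv ℝ (fun y : E => ‖y‖) x) x :=
    ((contDiffAt_norm (n := 1) ℝ hx).differentiableAt one_ne_zero).hasFDerivAt
  have hsq := congrArg (fun D => D w)
    ((hn.pow 2).unique (hasStrictFDerivAt_norm_sq x).hasFDerivAt)
  have hi : HasFDerivAt (fun y : E => inner ℝ V y) (innerSL ℝ V) x := (innerSL ℝ V).hasFDerivAt
  have hR : HasFDerivAt (randers V) _ x := hn.add hi
  rw [hR.fderiv]
  simp only [Nat.add_one_sub_one, pow_one, nsmul_eq_mul, Nat.cast_ofNat, smul_apply, smul_eq_mul,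
    coe_innerSL_apply] at hsq
  simp only [add_apply, coe_innerSL_apply, inner_add_left, inner_smul_left, Real.ringHom_apply]
  linarith

theorem exists_two_rays_inner_eq_mul [FiniteDimensional ℝ E] {B : LinearMap.BilinForm ℝ E}
    (hB : B.IsSymm) (hV : ‖V‖ < 1) {x₀ : E} (hx₀ : 0 < B x₀ x₀) :
    ∃ x : Fin 2 → E, (∀ i, 0 < B (x i) (x i) ∧
        ∃ c, ∀ w, inner ℝ (x i + ‖x i‖ • V) w = c * B (x i) w) ∧
      Pairwise fun i j => ¬SameRay ℝ (x i) (x j) := by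
  have hF := isMinkowskiNorm_randers hV
  obtain ⟨x, hx, hray⟩ := exists_two_rays_fderiv_rayleigh_eq_zero hB hF hx₀
  refine ⟨x, fun i => ⟨(hx i).1, ‖x i‖ / (rayleigh B (randers V) (x i) * randers V (x i)),
    fun w => ?_⟩, hray⟩
  have hpos := (rayleigh_pos_iff hF).2 (hx i).1
  have hx0 := ne_zero_of_rayleigh_pos hpos
  have hFx := hF.pos hx0
  rw [apply_eq_of_fderiv_rayleigh_eq_zero hB hF hx0 (hx i).2, ← norm_mul_fderiv_randers V hx0]
  field_simp

end Randers

theorem exists_two_rays_apply_eq_mul {L : Type*} [AddCommGroup L] [Module ℝ L]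
    [FiniteDimensional ℝ L] {B : LinearMap.BilinForm ℝ L} (hB : B.IsSymm)
    (α : L →ₗ[ℝ] L →ₗ[ℝ] ℝ) (hsymm : ∀ x y, α x y = α y x) (hpos : ∀ x, x ≠ 0 → 0 < α x x)
    {V : L} (hV : α V V < 1) {x₀ : L} (hx₀ : 0 < B x₀ x₀) :
    ∃ x : Fin 2 → L, (∀ i, 0 < B (x i) (x i) ∧
        ∃ c, ∀ w, α (x i + √(α (x i) (x i)) • V) w = c * B (x i) w) ∧
      Pairwise fun i j => ¬SameRay ℝ (x i) (x j) := by
  let core : InnerProductSpace.Core ℝ L :=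
    { inner x y := α x y
      conj_inner_symm x y := hsymm y x
      re_inner_nonneg x := by
        rcases eq_or_ne x 0 with rfl | hx
        · simp
        · exact (hpos x hx).le
      add_left x y z := by simp
      smul_left x y r := by simp
      definite x hx := by
        by_contra hx0
        exact (hpos x hx0).ne' hx }
  let : NormedAddCommGroup L := core.toNormedAddCommGroup
  let : InnerProductSpace ℝ L := InnerProductSpace.ofCore core.toCore
  have hnorm : ‖V‖ < 1 := by
    change √(α V V) < 1
    rwa [Real.sqrt_lt' one_pos, one_pow]
  exact exists_two_rays_inner_eq_mul hB hnorm hx₀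

section LieAlgebra

variable {L : Type*} [LieRing L] [LieAlgebra ℝ L] {B : LinearMap.BilinForm ℝ L}

theorem isGeodesicVector_of_apply_eq_mul (hinv : B.lieInvariant L) {α : L →ₗ[ℝ] L →ₗ[ℝ] ℝ}
    {V X : L} (hX : X ≠ 0) {c : ℝ} (h : ∀ w, α (X + √(α X X) • V) w = c * B X w) :
    IsGeodesicVector α V X := by
  refine ⟨hX, fun U => ?_⟩
  have hself := hinv X X U
  rw [lie_self, map_zero, LinearMap.zero_apply, zero_eq_neg] at hself
  rw [h, hself, mul_zero]

theorem exists_two_geodesic_vectors_of_pos [FiniteDimensional ℝ L] (hB : B.IsSymm)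
    (hinv : B.lieInvariant L) {Y : L} (hY : 0 < B Y Y) (α : L →ₗ[ℝ] L →ₗ[ℝ] ℝ)
    (hsymm : ∀ x y, α x y = α y x) (hpos : ∀ x, x ≠ 0 → 0 < α x x) {V : L} (hV : α V V < 1) :
    ∃ X : Fin 2 → L, (∀ i, IsGeodesicVector α V (X i)) ∧ (∀ i, 0 < B (X i) (X i)) ∧
      Pairwise fun i j => ¬SameRay ℝ (X i) (X j) := by
  obtain ⟨X, hX, hray⟩ := exists_two_rays_apply_eq_mul hB α hsymm hpos hV hY
  refine ⟨X, fun i => ?_, fun i => (hX i).1, hray⟩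
  obtain ⟨hi, c, hc⟩ := hX i
  exact isGeodesicVector_of_apply_eq_mul hinv (fun h => hi.ne' (by simp [h])) hc

theorem exists_four_geodesic_vectors_of_indefinite_killing_general [FiniteDimensional ℝ L]
    (hB : B.IsSymm) (hinv : B.lieInvariant L) {Yplus Yminus : L} (hplus : 0 < B Yplus Yplus)
    (hminus : B Yminus Yminus < 0) (α : L →ₗ[ℝ] L →ₗ[ℝ] ℝ) (hsymm : ∀ x y, α x y = α y x)
    (hpos : ∀ x, x ≠ 0 → 0 < α x x) {V : L} (hV : α V V < 1) :
    ∃ X : Fin 4 → L, (∀ i, IsGeodesicVector α V (X i)) ∧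
      ∀ i j, i ≠ j → ∀ t : ℝ, 0 < t → X i ≠ t • X j := by
  have hinv' : (-B).lieInvariant L := fun x y z => by simp [hinv x y z]
  obtain ⟨X, hX, hXpos, hXray⟩ := exists_two_geodesic_vectors_of_pos hB hinv hplus α hsymm hpos hV
  obtain ⟨Y, hY, hYneg, hYray⟩ :=
    exists_two_geodesic_vectors_of_pos hB.neg hinv' (neg_pos.2 hminus) α hsymm hpos hV
  have hXY : ∀ i j, ¬SameRay ℝ (X i) (Y j) := fun i j =>
    not_sameRay_of_pos_of_neg (hXpos i) (neg_pos.1 (hYneg j))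
  have hray : Pairwise fun i j => ¬SameRay ℝ (Fin.append X Y i) (Fin.append X Y j) := by
    intro i j hij
    induction i using Fin.addCases <;> induction j using Fin.addCases <;>
      simp only [Fin.append_left, Fin.append_right]
    · exact hXray (by rintro rfl; exact hij rfl)
    · exact hXY _ _
    · exact fun h => hXY _ _ h.symm
    · exact hYray (by rintro rfl; exact hij rfl)
  have hgeodesic : ∀ i, IsGeodesicVector α V (Fin.append X Y i) := by
    intro i
    induction i using Fin.addCases <;> simp only [Fin.append_left, Fin.append_right, hX, hY]
  refine ⟨Fin.append X Y, hgeodesic, fun i j hij t ht h => hray hij ?_⟩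
  rw [h]
  exact SameRay.sameRay_pos_smul_left _ ht

end LieAlgebra

/-- if the Killing form of a finite-dimensional real Lie algebra
is indefinite, then for any inner product α and vector V with α(V,V) < 1 there
exist at least four geodesic vectors for (α, V) such that no one of them is a
positive scalar multiple of another. -/
theorem exists_four_geodesic_vectors_of_indefinite_killing
    (L : Type*) [LieRing L] [LieAlgebra ℝ L] [FiniteDimensional ℝ L]
    (Yplus Yminus : L)
    (hplus : 0 < killing L Yplus Yplus)
    (hminus : killing L Yminus Yminus < 0)
    (α : L →ₗ[ℝ] L →ₗ[ℝ] ℝ)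
    (hsymm : ∀ x y, α x y = α y x)
    (hpos : ∀ x, x ≠ 0 → 0 < α x x)
    (V : L) (hV : α V V < 1) :
    ∃ X : Fin 4 → L,
      (∀ i, IsGeodesicVector α V (X i)) ∧
      ∀ i j, i ≠ j → ∀ t : ℝ, 0 < t → X i ≠ t • X j :=
  exists_four_geodesic_vectors_of_indefinite_killing_general (B := killingForm ℝ L)
    ⟨LieModule.traceForm_comm ℝ L L⟩ (LieModule.traceForm_lieInvariant ℝ L L) hplus hminus α hsymm
    hpos hV
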